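/- arXiv:0911.0445 — 9 statements merged into one kernel-verified Lean document; each statement's English description precedes it below -/
import Mathlib

section
/- Let n ≥ 1 and let G be a subgroup of S_n. Then the semigroup ⟨G,a⟩ is regular for every singular transformation a ∈ T_n∖S_n if and only if G has the universal transversal property. -/
/-!
Regularity of `⟨G, a⟩` for all singular `a` is equivalent to the universal transversal property.

If `G` has the property and `u` is any transformation with image `I`, some `g ∈ G` makes `Ig` a
transversal for the kernel of `u` (`exists_perm_image_surj`), so `gu` permutes `I`. Hence some
power `(gu)^(k+1)` fixes `I` pointwise, and `v = (gu)^k g` satisfies `u v u = u`.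

Conversely, given `I` and `P` with `|I| = |P| < n`, take `a` with image `I` and kernel `P`. An
inverse `v` of `a` in `⟨G, a⟩` lies in `G` or has the form `g a w` with `g ∈ G`
(`mem_genGA_form`). In both cases `a v a = a` forces `ga` to be injective on `I`, so that
`Ig` is a transversal for `P`. If `|P| = n`, every class is a singleton and `g = 1` works.
-/

open Finset

/-- Transformations of a set `α`, composed left-to-right (acting on the right):
`x (a * b) = (x a) b`. -/
structure Transf (α : Type*) where
  toFun : α → α

namespace Transf

variable {α : Type*}

instance : Semigroup (Transf α) where
  mul a b := ⟨fun x => b.toFun (a.toFun x)⟩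
  mul_assoc _ _ _ := rfl

/-- The transformation induced by a permutation. -/
def ofPerm (g : Equiv.Perm α) : Transf α := ⟨g⟩

/-- The rank of a transformation: the cardinality of its image. -/
noncomputable def rank (a : Transf α) : ℕ := Set.ncard (Set.range a.toFun)

end Transf

/-- The subsemigroup `⟨G, a⟩` generated by `G ∪ {a}`. -/
def genGA {α : Type*} (G : Subgroup (Equiv.Perm α)) (a : Transf α) :
    Subsemigroup (Transf α) :=
  Subsemigroup.closure (insert a (Transf.ofPerm '' (G : Set (Equiv.Perm α))))

/-- The set `⟨G, a⟩ ∖ G`. -/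
def genGAminusG {α : Type*} (G : Subgroup (Equiv.Perm α)) (a : Transf α) :
    Set (Transf α) :=
  (genGA G a : Set (Transf α)) \ (Transf.ofPerm '' (G : Set (Equiv.Perm α)))

/-- The set of conjugates `a^g = g⁻¹ a g` with `g ∈ G`. -/
def conjSet {α : Type*} (G : Subgroup (Equiv.Perm α)) (a : Transf α) : Set (Transf α) :=
  (fun g : Equiv.Perm α => Transf.ofPerm g⁻¹ * a * Transf.ofPerm g) '' (G : Set (Equiv.Perm α))

/-- The subsemigroup `⟨a^g | g ∈ G⟩`. -/
def genConj {α : Type*} (G : Subgroup (Equiv.Perm α)) (a : Transf α) :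
    Subsemigroup (Transf α) :=
  Subsemigroup.closure (conjSet G a)

/-- A subset of the transformation semigroup is regular if every element `u` of it
admits `v` in the set with `u = u v u`. -/
def IsRegularSet {α : Type*} (S : Set (Transf α)) : Prop :=
  ∀ u ∈ S, ∃ v ∈ S, u * v * u = u

/-- A subset of the transformation semigroup is idempotent generated if it coincides with
the subsemigroup generated by its idempotent elements. -/
def IsIdemGen {α : Type*} (S : Set (Transf α)) : Prop :=
  S = ↑(Subsemigroup.closure {u | u ∈ S ∧ u * u = u})

/-- `T` is a transversal for the partition `P`: it meets each class in exactly one point. -/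
def IsTransversal {α : Type*} [DecidableEq α] [Fintype α] (T : Finset α)
    (P : Finpartition (Finset.univ : Finset α)) : Prop :=
  ∀ p ∈ P.parts, (T ∩ p).card = 1

/-- The universal transversal property: for every subset `I` and every partition `P`
with exactly `|I|` classes, some `G`-translate of `I` is a transversal for `P`. -/
def HasUTP {α : Type*} [DecidableEq α] [Fintype α] (G : Subgroup (Equiv.Perm α)) : Prop :=
  ∀ (I : Finset α) (P : Finpartition (Finset.univ : Finset α)),
    P.parts.card = I.card → ∃ g ∈ G, IsTransversal (I.image ⇑g) P

/-- Every element of `⟨G, a⟩` is in `G` or factors as `g a w` with `g ∈ G`; the remaining factor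
is only recorded as a map `w`. -/
lemma mem_genGA_form {α : Type*} {G : Subgroup (Equiv.Perm α)} {a v : Transf α}
    (hv : v ∈ genGA G a) :
    ∃ g ∈ G, v.toFun = g ∨ ∃ w : α → α, ∀ x, v.toFun x = w (a.toFun (g x)) := by
  induction hv using Subsemigroup.closure_induction with
  | mem x hx =>
    rcases hx with rfl | ⟨g, hg, rfl⟩
    · exact ⟨1, G.one_mem, Or.inr ⟨id, fun _ => rfl⟩⟩
    · exact ⟨g, hg, Or.inl rfl⟩
  | mul x y _ _ hx hy =>
    obtain ⟨g, hg, hx | ⟨w, hw⟩⟩ := hx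
    · obtain ⟨h, hh, hy | ⟨w, hw⟩⟩ := hy
      · refine ⟨h * g, G.mul_mem hh hg, Or.inl ?_⟩
        change (fun t => y.toFun (x.toFun t)) = _
        rw [hx, hy]; rfl
      · refine ⟨h * g, G.mul_mem hh hg, Or.inr ⟨w, fun t => ?_⟩⟩
        change y.toFun (x.toFun t) = _
        rw [hw, hx]; rfl
    · refine ⟨g, hg, Or.inr ⟨fun t => y.toFun (w t), fun t => ?_⟩⟩
      change y.toFun (x.toFun t) = _
      rw [hw]

/-- The universal transversal property applied to the image and the kernel of `f`. -/
lemma exists_perm_image_surj {α : Type*} [DecidableEq α] [Fintype α]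
    {G : Subgroup (Equiv.Perm α)} (hG : HasUTP G) (f : α → α) :
    ∃ g ∈ G, ∀ y, ∃ x, f (g (f x)) = f y := by
  classical
  let P : Finpartition (univ : Finset α) := Finpartition.ofSetoid (Setoid.ker f)
  have hP : P.parts = (univ.image f).image (fun i => univ.filter (fun y => i = f y)) := by
    rw [image_image]
    ext p
    simp [P, Finpartition.ofSetoid, Finpartition.ofSetSetoid]
  have hcard : P.parts.card = (univ.image f).card := by
    rw [hP, card_image_of_injOn]
    intro i hi j _ hij
    obtain ⟨x, rfl⟩ : ∃ x, f x = i := by simpa using hi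
    have hx : x ∈ univ.filter (fun y => j = f y) := by
      rw [← show _ = univ.filter (fun y => j = f y) from hij]; simp
    exact (mem_filter.1 hx).2.symm
  obtain ⟨g, hg, hT⟩ := hG _ P hcard
  refine ⟨g, hg, fun y => ?_⟩
  have hp : univ.filter (fun z => f y = f z) ∈ P.parts := by
    rw [hP]; exact mem_image_of_mem _ (mem_image_of_mem _ (mem_univ _))
  obtain ⟨z, hz⟩ := card_pos.1 (by rw [hT _ hp]; exact one_pos)
  simp only [mem_inter, mem_image, mem_filter, mem_univ, true_and, exists_exists_eq_and] at hz
  obtain ⟨⟨x, rfl⟩, hx⟩ := hz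
  exact ⟨x, hx.symm⟩

lemma isRegularSet_of_hasUTP {α : Type*} [DecidableEq α] [Fintype α]
    {G : Subgroup (Equiv.Perm α)} (hG : HasUTP G) (a : Transf α) :
    IsRegularSet (genGA G a : Set (Transf α)) := by
  intro u hu
  obtain ⟨g, hg, hsurj⟩ := exists_perm_image_surj hG u.toFun
  have hgm : Transf.ofPerm g ∈ genGA G a :=
    Subsemigroup.subset_closure (Or.inr ⟨g, hg, rfl⟩)
  let f : α → α := fun x => u.toFun (g x)
  -- `v = (gu)^k g` for an arbitrary exponent `k`
  have hmem : ∀ k : ℕ, (⟨fun x => g (f^[k] x)⟩ : Transf α) ∈ genGA G a := by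
    intro k
    induction k with
    | zero => exact hgm
    | succ k ih =>
      have := (genGA G a).mul_mem ((genGA G a).mul_mem ih hu) hgm
      convert this using 1
      change _ = (⟨fun x => g (u.toFun (g (f^[k] x)))⟩ : Transf α)
      simp only [Function.iterate_succ_apply', f]
  let F : Set.range u.toFun → Set.range u.toFun := fun x => ⟨f x, ⟨g x, rfl⟩⟩
  have hF : Function.Surjective F := by
    rintro ⟨_, y, rfl⟩
    obtain ⟨x, hx⟩ := hsurj y
    exact ⟨⟨_, x, rfl⟩, Subtype.ext hx⟩
  let e : Equiv.Perm (Set.range u.toFun) := 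
    Equiv.ofBijective F (Finite.surjective_iff_bijective.1 hF)
  have hpow : ∀ (k : ℕ) (x : Set.range u.toFun),
      (((e ^ k) x : Set.range u.toFun) : α) = f^[k] x := by
    intro k x
    induction k with
    | zero => rfl
    | succ k ih =>
      rw [pow_succ', Function.iterate_succ_apply', ← ih]
      rfl
  obtain ⟨k, hk⟩ : ∃ k, orderOf e = k + 1 := ⟨_, (Nat.succ_pred_eq_of_pos (orderOf_pos e)).symm⟩
  refine ⟨_, hmem k, ?_⟩
  change (⟨fun x => u.toFun (g (f^[k] (u.toFun x)))⟩ : Transf α) = ⟨u.toFun⟩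
  congr 1
  funext x
  change f (f^[k] (u.toFun x)) = _
  rw [← Function.iterate_succ_apply' f, ← Nat.add_one, ← hk, ← hpow _ ⟨u.toFun x, x, rfl⟩, pow_orderOf_eq_one]
  rfl

/-- If `a` maps into `I` and `ga` is injective on `I`, then `g` carries `I` to a transversal for
the kernel `P` of `a`. -/
lemma isTransversal_image {α : Type*} [DecidableEq α] [Fintype α] (I : Finset α)
    (P : Finpartition (univ : Finset α)) (a : α → α) (haI : ∀ x, a x ∈ I)
    (hker : ∀ x y, a x = a y ↔ P.part x = P.part y) (g : Equiv.Perm α)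
    (hinj : ∀ x ∈ I, ∀ y ∈ I, a (g x) = a (g y) → x = y) :
    IsTransversal (I.image ⇑g) P := by
  intro p hp
  obtain ⟨z, hz⟩ := P.nonempty_of_mem_parts hp
  have hpz : P.part z = p := P.part_eq_of_mem hp hz
  -- an injective self-map of the finite set `I` is onto
  obtain ⟨x, hx, hxz⟩ := Finset.surj_on_of_inj_on_of_card_le (s := I) (t := I)
    (fun x _ => a (g x)) (fun _ _ => haI _) (fun x y hx hy h => hinj x hx y hy h) le_rfl
    (a z) (haI z)
  rw [card_eq_one]
  refine ⟨g x, ?_⟩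
  ext y
  simp only [mem_inter, mem_image, mem_singleton]
  constructor
  · rintro ⟨⟨w, hw, rfl⟩, hy⟩
    have h1 : P.part (g w) = p := P.part_eq_of_mem hp hy
    have h2 : a (g w) = a z := (hker _ _).2 (h1.trans hpz.symm)
    rw [hinj w hw x hx (h2.trans hxz)]
  · rintro rfl
    refine ⟨⟨x, hx, rfl⟩, ?_⟩
    rw [← hpz, (hker _ _).1 hxz]
    exact P.mem_part (mem_univ _)

lemma hasUTP_of_isRegularSet {α : Type*} [DecidableEq α] [Fintype α]
    {G : Subgroup (Equiv.Perm α)}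
    (h : ∀ a : Transf α, ¬ Function.Bijective a.toFun →
      IsRegularSet (genGA G a : Set (Transf α))) : HasUTP G := by
  intro I P hIP
  let e : P.parts ≃ I := Finset.equivOfCardEq hIP
  let a : α → α := fun x => e ⟨P.part x, P.part_mem.2 (mem_univ x)⟩
  have haI : ∀ x, a x ∈ I := fun x => (e _).2
  have hker : ∀ x y, a x = a y ↔ P.part x = P.part y := by
    intro x y
    simp only [a, Subtype.coe_inj, e.injective.eq_iff, Subtype.mk.injEq]
  have hsurj : ∀ i ∈ I, ∃ x, a x = i := by
    intro i hi
    obtain ⟨⟨p, hp⟩, hpi⟩ := e.surjective ⟨i, hi⟩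
    obtain ⟨z, hz⟩ := P.nonempty_of_mem_parts hp
    refine ⟨z, ?_⟩
    simp only [a, P.part_eq_of_mem hp hz, hpi]
  by_cases hb : Function.Bijective a
  · exact ⟨1, G.one_mem, isTransversal_image I P a haI hker 1 fun x _ y _ hxy => hb.1 hxy⟩
  · obtain ⟨v, hv, hava⟩ := h ⟨a⟩ hb ⟨a⟩ (Subsemigroup.subset_closure (Or.inl rfl))
    have hfix : ∀ x ∈ I, a (v.toFun x) = x := by
      intro x hx
      obtain ⟨t, rfl⟩ := hsurj x hx
      exact congrFun (congrArg Transf.toFun hava) t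
    obtain ⟨g, hg, hvg⟩ := mem_genGA_form hv
    refine ⟨g, hg, isTransversal_image I P a haI hker g fun x hx y hy hxy => ?_⟩
    rw [← hfix x hx, ← hfix y hy]
    rcases hvg with hvg | ⟨w, hw⟩
    · rw [hvg, hxy]
    · rw [hw, hw]
      exact congrArg (fun t => a (w t)) hxy

theorem stmt0 (n : ℕ) (hn : 1 ≤ n) (G : Subgroup (Equiv.Perm (Fin n))) :
    (∀ a : Transf (Fin n), ¬ Function.Bijective a.toFun →
      IsRegularSet (genGA G a : Set (Transf (Fin n)))) ↔ HasUTP G :=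
  ⟨hasUTP_of_isRegularSet, fun hG a _ => isRegularSet_of_hasUTP hG a⟩
end

section
/- Let n ≥ 1 and let G be a subgroup of S_n. Then the semigroup ⟨G,a⟩∖G is regular for every singular transformation a ∈ T_n∖S_n if and only if G has the universal transversal property. -/
/-!
Write `S = ⟨G, a⟩ ∖ G` for a singular `a`.

If `S` is regular and `a` has image `I` and kernel `P`, then `a = a v a` for some `v ∈ S`.  Any
element of `⟨G, a⟩` is in `G` or starts with a factor `g a` with `g ∈ G`, so `a v a = a` forces `a`
to be injective on `I g`; as `|I g| = |P|`, the set `I g` is a transversal of `P`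
(`isTransversal_of_injOn`).  Every pair `(I, P)` with `|I| = |P|` is the image and kernel of some
`a`; if that `a` is a permutation, then `g = 1` already works.

Conversely, for `u ∈ S` the universal transversal property gives `g ∈ G` carrying the image of `u`
to a transversal of the kernel of `u`.  Then `f = u g` is injective on its own image, so by
finiteness `f ^ (d + 1) = f` for some `d ≥ 1` (`exists_iterate_of_injOn_range`).  Cancelling `g`
gives `f ^ d u = u`, hence also `f ^ (2 d) u = u`, and `v = g f ^ (2 d - 1)` satisfies `u v u = u`.
The exponent `2 d - 1` is positive, which ensures that `v` is singular and hence lies in `S`.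
-/

open Finset

theorem card_image_le_of_ker {α β γ : Type*} [Fintype α] [DecidableEq β] [DecidableEq γ]
    (f : α → β) (h : α → γ) (hk : ∀ x y, f x = f y → h x = h y) :
    (univ.image h).card ≤ (univ.image f).card := by
  rcases isEmpty_or_nonempty α with _ | ⟨⟨x₀⟩⟩
  · simp
  have : Nonempty γ := ⟨h x₀⟩
  have hfac : Function.FactorsThrough h f := fun x y => hk x y
  obtain ⟨k, rfl⟩ := (Function.factorsThrough_iff h).1 hfac
  rw [← Finset.image_image]
  exact Finset.card_image_le

theorem parts_eq_image_part {α : Type*} [Fintype α] [DecidableEq α]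
    (P : Finpartition (univ : Finset α)) : P.parts = univ.image P.part := by
  ext p
  simp only [mem_image, mem_univ, true_and]
  constructor
  · intro hp
    obtain ⟨x, hx⟩ := P.nonempty_of_mem_parts hp
    exact ⟨x, P.part_eq_of_mem hp hx⟩
  · rintro ⟨x, rfl⟩
    exact P.part_mem.2 (mem_univ x)

/-- A set with as many points as `P` has classes is a transversal of `P` as soon as it carries a
map injective on it whose kernel contains `P`. -/
theorem isTransversal_of_injOn {α β : Type*} [Fintype α] [DecidableEq α]
    (P : Finpartition (univ : Finset α)) (T : Finset α) (f : α → β)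
    (hf : ∀ x y, P.part x = P.part y → f x = f y)
    (hT : Set.InjOn f T) (hc : P.parts.card = T.card) : IsTransversal T P := by
  intro p hp
  have hinj : Set.InjOn P.part T := fun x hx y hy h => hT hx hy (hf x y h)
  have hmaps : Set.MapsTo P.part T P.parts := fun x _ => P.part_mem.2 (mem_univ x)
  have hsurj : Set.SurjOn P.part T P.parts :=
    Finset.surjOn_of_injOn_of_card_le P.part hmaps hinj hc.le
  obtain ⟨x, hx, rfl⟩ := hsurj hp
  rw [Finset.card_eq_one]
  refine ⟨x, ?_⟩
  ext y
  simp only [mem_inter, mem_singleton]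
  constructor
  · rintro ⟨hy, hyx⟩
    exact hinj hy hx (P.part_eq_of_mem hp hyx)
  · rintro rfl
    exact ⟨hx, P.mem_part (mem_univ y)⟩

/-- A self-map of a finite set that is injective on its image generates a finite cyclic group,
with `f ^ d` as the identity. -/
theorem exists_iterate_of_injOn_range {α : Type*} [Finite α] (f : α → α)
    (hf : Set.InjOn f (Set.range f)) : ∃ d, 0 < d ∧ ∀ x, f^[d] (f x) = f x := by
  obtain ⟨i, j, hne, hij⟩ := Finite.exists_ne_map_eq_of_infinite (fun k : ℕ => f^[k])
  wlog hlt : i < j generalizing i j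
  · exact this j i hne.symm hij.symm (by omega)
  refine ⟨j - i, by omega, fun x => ?_⟩
  have hinj : ∀ k, Set.InjOn f^[k] (Set.range f) := fun k =>
    hf.iterate (fun x _ => ⟨x, rfl⟩) k
  refine hinj i ⟨f^[j - i] x, ?_⟩ ⟨x, rfl⟩ ?_
  · rw [← Function.iterate_succ_apply' f, Function.iterate_succ_apply]
  · rw [← Function.iterate_add_apply, show i + (j - i) = j by omega]
    exact (congrFun hij (f x)).symm

section Generated

variable {α : Type*} {G : Subgroup (Equiv.Perm α)} {a : Transf α}

theorem ofPerm_mem_genGA {g : Equiv.Perm α} (hg : g ∈ G) : Transf.ofPerm g ∈ genGA G a :=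
  Subsemigroup.subset_closure (Or.inr ⟨g, hg, rfl⟩)

theorem self_mem_genGA : a ∈ genGA G a :=
  Subsemigroup.subset_closure (Or.inl rfl)

/-- The first factor of an element of `⟨G, a⟩` outside `G`: it starts with `g a`, where `g ∈ G` and
the remaining factor is recorded only as a map `w`. -/
theorem genGA_cases {v : Transf α} (hv : v ∈ genGA G a) :
    (∃ g ∈ G, v = Transf.ofPerm g) ∨
      ∃ g ∈ G, ∃ w : α → α, ∀ x, v.toFun x = w (a.toFun (g x)) := by
  induction hv using Subsemigroup.closure_induction with
  | mem v hv =>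
    rcases hv with rfl | ⟨g, hg, rfl⟩
    · exact Or.inr ⟨1, G.one_mem, id, fun _ => rfl⟩
    · exact Or.inl ⟨g, hg, rfl⟩
  | mul u v _ _ hu hv =>
    rcases hu with ⟨g, hg, rfl⟩ | ⟨g, hg, w, hw⟩
    · rcases hv with ⟨h, hh, rfl⟩ | ⟨h, hh, w, hw⟩
      · exact Or.inl ⟨h * g, G.mul_mem hh hg, rfl⟩
      · exact Or.inr ⟨h * g, G.mul_mem hh hg, w, fun x => hw (g x)⟩
    · exact Or.inr ⟨g, hg, v.toFun ∘ w, fun x => congrArg v.toFun (hw x)⟩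

theorem not_injective_of_mem_genGAminusG [Finite α] (ha : ¬ Function.Bijective a.toFun)
    {u : Transf α} (hu : u ∈ genGAminusG G a) : ¬ Function.Injective u.toFun := by
  rcases genGA_cases hu.1 with ⟨g, hg, rfl⟩ | ⟨g, hg, w, hw⟩
  · exact (hu.2 ⟨g, hg, rfl⟩).elim
  · intro hinj
    apply ha
    rw [← Finite.injective_iff_bijective]
    intro x y hxy
    have h : u.toFun (g.symm x) = u.toFun (g.symm y) := by simp [hw, hxy]
    exact g.symm.injective (hinj h)

theorem exists_mem_genGA_iterate {u : Transf α} (hu : u ∈ genGA G a) {g : Equiv.Perm α}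
    (hg : g ∈ G) (k : ℕ) :
    ∃ v ∈ genGA G a, ∀ x, v.toFun x = (fun y => g (u.toFun y))^[k] (g x) := by
  induction k with
  | zero => exact ⟨_, ofPerm_mem_genGA hg, fun _ => rfl⟩
  | succ k ih =>
    obtain ⟨v, hv, h⟩ := ih
    refine ⟨v * (u * Transf.ofPerm g), mul_mem hv (mul_mem hu (ofPerm_mem_genGA hg)), fun x => ?_⟩
    rw [Function.iterate_succ_apply', ← h]
    rfl

end Generated

theorem exists_transf_of_parts {α : Type*} [Fintype α] [DecidableEq α] (I : Finset α)
    (P : Finpartition (univ : Finset α)) (hc : P.parts.card = I.card) :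
    ∃ a : Transf α, (∀ x y, a.toFun x = a.toFun y ↔ P.part x = P.part y) ∧
      ∀ z ∈ I, ∃ x, a.toFun x = z := by
  let e := Finset.equivOfCardEq hc
  refine ⟨⟨fun x => e ⟨P.part x, P.part_mem.2 (mem_univ x)⟩⟩, fun x y => ?_, fun z hz => ?_⟩
  · simp [Subtype.ext_iff]
  · obtain ⟨⟨p, hp⟩, hpz⟩ := e.surjective ⟨z, hz⟩
    obtain ⟨x, hx⟩ := P.nonempty_of_mem_parts hp
    refine ⟨x, ?_⟩
    have : P.part x = p := P.part_eq_of_mem hp hx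
    simp [this, hpz]

theorem hasUTP_of_regular {α : Type*} [Fintype α] [DecidableEq α]
    {G : Subgroup (Equiv.Perm α)}
    (H : ∀ a : Transf α, ¬ Function.Bijective a.toFun → IsRegularSet (genGAminusG G a)) :
    HasUTP G := by
  intro I P hc
  obtain ⟨a, hker, hI⟩ := exists_transf_of_parts I P hc
  have key : ∀ g ∈ G, (∀ x ∈ I, ∀ y ∈ I, a.toFun (g x) = a.toFun (g y) → x = y) →
      ∃ g ∈ G, IsTransversal (I.image ⇑g) P := by
    intro g hg h
    refine ⟨g, hg, isTransversal_of_injOn P _ a.toFun (fun x y => (hker x y).2) ?_ ?_⟩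
    · intro x hx y hy hxy
      simp only [coe_image, Set.mem_image, mem_coe] at hx hy
      obtain ⟨x, hx, rfl⟩ := hx
      obtain ⟨y, hy, rfl⟩ := hy
      rw [h x hx y hy hxy]
    · rw [hc, Finset.card_image_of_injective _ g.injective]
  by_cases ha : Function.Bijective a.toFun
  · exact key 1 G.one_mem fun x _ y _ h => ha.1 h
  have hmem : a ∈ genGAminusG G a := by
    refine ⟨self_mem_genGA, ?_⟩
    rintro ⟨g, _, rfl⟩
    exact ha g.bijective
  obtain ⟨v, hv, hava⟩ := H a ha a hmem
  have hava' : ∀ x, a.toFun (v.toFun (a.toFun x)) = a.toFun x := fun x =>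
    congrFun (congrArg Transf.toFun hava) x
  rcases genGA_cases hv.1 with ⟨g, hg, rfl⟩ | ⟨g, hg, w, hw⟩
  · exact (hv.2 ⟨g, hg, rfl⟩).elim
  · refine key g hg fun x hx y hy hxy => ?_
    obtain ⟨x, rfl⟩ := hI x hx
    obtain ⟨y, rfl⟩ := hI y hy
    rw [← hava' x, ← hava' y, hw, hw, hxy]

/-- The universal transversal property applied to the image and the kernel of a map. -/
theorem HasUTP.exists_injOn {α : Type*} [Fintype α] [DecidableEq α]
    {G : Subgroup (Equiv.Perm α)} (H : HasUTP G) (f : α → α) :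
    ∃ g ∈ G, ∀ x y, f (g (f x)) = f (g (f y)) → g (f x) = g (f y) := by
  let P : Finpartition (univ : Finset α) := Finpartition.ofSetoid (Setoid.ker f)
  have hker : ∀ x y, f x = f y ↔ P.part x = P.part y := by
    intro x y
    rw [← P.mem_part_iff_part_eq_part (mem_univ x) (mem_univ y)]
    exact eq_comm.trans (Finpartition.mem_part_ofSetoid_iff_rel (s := Setoid.ker f)).symm
  have hc : P.parts.card = (univ.image f).card := by
    rw [parts_eq_image_part]
    exact le_antisymm (card_image_le_of_ker _ _ fun x y => (hker x y).1)
      (card_image_le_of_ker _ _ fun x y => (hker x y).2)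
  obtain ⟨g, hg, hT⟩ := H (univ.image f) P hc
  refine ⟨g, hg, fun x y hxy => ?_⟩
  have h1 := hT (P.part (g (f x))) (P.part_mem.2 (mem_univ _))
  refine Finset.card_le_one.1 h1.le _ ?_ _ ?_
  · simp [P.mem_part]
  · rw [(hker _ _).1 hxy]
    simp [P.mem_part]

theorem regular_of_hasUTP {α : Type*} [Fintype α] [DecidableEq α]
    {G : Subgroup (Equiv.Perm α)} (H : HasUTP G) (a : Transf α)
    (ha : ¬ Function.Bijective a.toFun) : IsRegularSet (genGAminusG G a) := by
  intro u hu
  obtain ⟨g, hg, hinj⟩ := H.exists_injOn u.toFun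
  set f : α → α := fun y => g (u.toFun y) with hf
  have hfinj : Set.InjOn f (Set.range f) := by
    rintro _ ⟨x, rfl⟩ _ ⟨y, rfl⟩ h
    exact hinj x y (g.injective h)
  obtain ⟨d, hd, hfd⟩ := exists_iterate_of_injOn_range f hfinj
  have hfd2 : ∀ x, f^[2 * d] (f x) = f x := fun x => by
    rw [two_mul, Function.iterate_add_apply, hfd, hfd]
  obtain ⟨k, hk⟩ : ∃ k, 2 * d = k + 2 := ⟨2 * d - 2, by omega⟩
  obtain ⟨v, hv, hvf⟩ := exists_mem_genGA_iterate hu.1 hg (k + 1)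
  refine ⟨v, ⟨hv, ?_⟩, ?_⟩
  · rintro ⟨h, _, rfl⟩
    apply not_injective_of_mem_genGAminusG ha hu
    intro x y hxy
    have h1 : f x = f y := congrArg g hxy
    have h2 : h (g.symm x) = h (g.symm y) := by
      have e1 := hvf (g.symm x)
      have e2 := hvf (g.symm y)
      rw [Equiv.apply_symm_apply, Function.iterate_succ_apply] at e1 e2
      exact e1.trans ((congrArg f^[k] h1).trans e2.symm)
    exact g.symm.injective (h.injective h2)
  · have : ∀ x, u.toFun (v.toFun (u.toFun x)) = u.toFun x := fun x => by
      apply g.injective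
      have h := hfd2 x
      rw [hk, Function.iterate_succ_apply'] at h
      rw [hvf]
      exact h
    exact congrArg Transf.mk (funext this)

theorem stmt1 (n : ℕ) (hn : 1 ≤ n) (G : Subgroup (Equiv.Perm (Fin n))) :
    (∀ a : Transf (Fin n), ¬ Function.Bijective a.toFun →
      IsRegularSet (genGAminusG G a)) ↔ HasUTP G := by
  exact ⟨hasUTP_of_regular, regular_of_hasUTP⟩
end

section
/- Let n ≥ 1 and let a ∈ T_n∖S_n be a singular transformation. Then the semigroup S = ⟨a^g | g ∈ S_n⟩ is idempotent generated and regular. -/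
/-!
Write `S = ⟨aᵍ | g ∈ Sₙ⟩`. Some permutation `p` and idempotent `e` satisfy `a = e p`, and then
`a · a^p · a^(p²) ⋯ a^(p^(k-1)) = e pᵏ`; taking `k` to be the order of `p` gives `e ∈ S`
(`idem_mem_of_mul_perm`).

Conversely, let `E = ⟨eᵍ | g ∈ Sₙ⟩`. If `f` is a conjugate of `e` and a transposition `(x y)` moves
exactly one point of the image of `f`, then `f (x y) = f f'` for a conjugate `f'` of `f`
(`exists_conj_mul_swap`). If both `x, y` lie in the image, a point `w` outside it (which exists by
singularity) serves as temporary storage: `f (x y)` equals `f (x w) (y x) (w y)`, and three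
applications of the previous fact suffice. Hence `E` is closed under right multiplication by
permutations (`mul_perm_mem`). So `a = e p` lies in `E`, which gives `S = E`, and `S` is generated
by idempotents.

For regularity, let `u ∈ S` and choose a permutation `q` such that `u q` is idempotent. Then
`v = q u q = (q u q⁻¹) q q` lies in `S`, and `u v u = (u q)(u q) u = u`.
-/


open Finset

namespace Transf

variable {α : Type*}

/-- The conjugate `xᵍ = g⁻¹ x g`. -/
def conj (g : Equiv.Perm α) (x : Transf α) : Transf α := ofPerm g⁻¹ * x * ofPerm g

theorem ext_toFun {x y : Transf α} (h : ∀ t, x.toFun t = y.toFun t) : x = y := by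
  cases x; cases y; congr; exact funext h

theorem mul_toFun (x y : Transf α) (t : α) : (x * y).toFun t = y.toFun (x.toFun t) := rfl

theorem ofPerm_toFun (g : Equiv.Perm α) (t : α) : (ofPerm g).toFun t = g t := rfl

theorem conj_toFun (g : Equiv.Perm α) (x : Transf α) (t : α) :
    (conj g x).toFun t = g (x.toFun (g⁻¹ t)) := rfl

theorem conj_mul (g : Equiv.Perm α) (x y : Transf α) :
    conj g (x * y) = conj g x * conj g y := by
  apply ext_toFun; intro t; simp [conj_toFun, mul_toFun]

theorem conj_conj (g h : Equiv.Perm α) (x : Transf α) :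
    conj h (conj g x) = conj (h * g) x := by
  apply ext_toFun; intro t; simp [conj_toFun]

theorem conj_one (x : Transf α) : conj 1 x = x := rfl

theorem idem_apply {f : Transf α} (hf : f * f = f) (t : α) :
    f.toFun (f.toFun t) = f.toFun t := by
  rw [← mul_toFun, hf]

theorem conj_mem_genConj {a x : Transf α} (g : Equiv.Perm α) (hx : x ∈ genConj ⊤ a) :
    conj g x ∈ genConj ⊤ a := by
  induction hx using Subsemigroup.closure_induction with
  | mem x hx =>
    obtain ⟨h, -, rfl⟩ := hx
    exact Subsemigroup.subset_closure ⟨g * h, trivial, (conj_conj h g a).symm⟩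
  | mul x y _ _ hx hy => rw [conj_mul]; exact mul_mem hx hy

theorem self_mem_genConj (a : Transf α) : a ∈ genConj ⊤ a :=
  Subsemigroup.subset_closure ⟨1, trivial, rfl⟩

theorem genConj_le {a b : Transf α} (h : a ∈ genConj ⊤ b) : genConj ⊤ a ≤ genConj ⊤ b := by
  refine Subsemigroup.closure_le.2 ?_
  rintro _ ⟨g, -, rfl⟩
  exact conj_mem_genConj g h

/-- A permutation extending an injective choice of preimages `im u → α` turns `u` into an
idempotent with the same kernel. -/
theorem exists_perm_idem [Finite α] (u : Transf α) :
    ∃ q : Equiv.Perm α, (u * ofPerm q) * (u * ofPerm q) = u * ofPerm q := by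
  classical
  cases nonempty_fintype α
  rcases isEmpty_or_nonempty α with hα | hα
  · exact ⟨1, ext_toFun fun t => isEmptyElim t⟩
  have hinv : ∀ t, u.toFun (Function.invFun u.toFun (u.toFun t)) = u.toFun t :=
    fun t => Function.invFun_eq ⟨t, rfl⟩
  have hinj : Set.InjOn (Function.invFun u.toFun) (Set.range u.toFun) := by
    rintro _ ⟨s, rfl⟩ _ ⟨t, rfl⟩ h
    rw [← hinv s, h, hinv t]
  obtain ⟨g, hg⟩ := Set.MapsTo.exists_equiv_extend_of_card_eq (t := Finset.univ)
    (Finset.card_univ (α := α)).symm (fun _ _ => by simp) hinj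
  refine ⟨g.trans (Equiv.subtypeUnivEquiv (by simp)), ext_toFun fun t => ?_⟩
  have key : ∀ t, (g (u.toFun t) : α) = Function.invFun u.toFun (u.toFun t) :=
    fun t => hg _ ⟨t, rfl⟩
  simp [mul_toFun, ofPerm_toFun, key, hinv]

/-- If `e` is idempotent, then `(e p)(e p)^p ⋯ (e p)^(p^k) = e p^(k+1)`; at the order of `p` this
product is `e`. -/
theorem idem_mem_of_mul_perm [Finite α] {e : Transf α} (he : e * e = e) (p : Equiv.Perm α) :
    e ∈ genConj ⊤ (e * ofPerm p) := by
  have key : ∀ k : ℕ, e * ofPerm (p ^ (k + 1)) ∈ genConj ⊤ (e * ofPerm p) := by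
    intro k
    induction k with
    | zero => simpa using self_mem_genConj (e * ofPerm p)
    | succ k ih =>
      have h := mul_mem ih (conj_mem_genConj (p ^ (k + 1)) (self_mem_genConj (e * ofPerm p)))
      convert h using 1
      apply ext_toFun; intro t
      simp [mul_toFun, ofPerm_toFun, conj_toFun, idem_apply he, pow_succ (n := k + 1)]
  have h := key (orderOf p - 1)
  rw [Nat.sub_add_cancel (orderOf_pos p), pow_orderOf_eq_one] at h
  exact h

/-- If `x` is in the image of the idempotent `f` and `y` is not, then `f (x y) = f f'` where `f'` is
a conjugate of `f` whose image is that of `f` with `x` replaced by `y`. -/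
theorem exists_conj_mul_swap [DecidableEq α] {f : Transf α} (hf : f * f = f) {x y : α}
    (hx : f.toFun x = x) (hy : f.toFun y ≠ y) :
    ∃ g : Equiv.Perm α, f * ofPerm (Equiv.swap x y) = f * conj g f ∧
      (conj g f).toFun x ≠ x ∧ (conj g f).toFun y = y ∧
      ∀ i, i ≠ x → f.toFun i = i → (conj g f).toFun i = i := by
  have hxy : x ≠ y := by rintro rfl; exact hy hx
  have hz : f.toFun (f.toFun y) = f.toFun y := idem_apply hf y
  -- `g` sends `y ↦ x`, `f y ↦ y`, `x ↦ f y`; it degenerates to `(x y)` when `f y = x`.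
  obtain ⟨g, hg⟩ : ∃ g, g = Equiv.swap x y * Equiv.swap (f.toFun y) x := ⟨_, rfl⟩
  have gy : g y = x := by
    rw [hg, Equiv.Perm.mul_apply, Equiv.swap_apply_of_ne_of_ne hy.symm hxy.symm,
      Equiv.swap_apply_right]
  have gz : g (f.toFun y) = y := by simp [hg]
  have gx : f.toFun y ≠ x → g x = f.toFun y := fun h => by
    rw [hg, Equiv.Perm.mul_apply, Equiv.swap_apply_right, Equiv.swap_apply_of_ne_of_ne h hy]
  have go : ∀ i, i ≠ x → i ≠ y → i ≠ f.toFun y → g i = i := fun i h1 h2 h3 => by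
    rw [hg, Equiv.Perm.mul_apply, Equiv.swap_apply_of_ne_of_ne h3 h1,
      Equiv.swap_apply_of_ne_of_ne h1 h2]
  have hc : ∀ t, (conj g f).toFun (g t) = g (f.toFun t) := fun t => by simp [conj_toFun]
  have cx : (conj g f).toFun x = y := by rw [← gz, ← hc, gy]
  have cy : (conj g f).toFun y = y := by
    have := hc (f.toFun y)
    rwa [hz, gz] at this
  have co : ∀ i, i ≠ x → f.toFun i = i → (conj g f).toFun i = i := by
    intro i hix hi
    have hiy : i ≠ y := by rintro rfl; exact hy hi
    by_cases hiz : i = f.toFun y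
    · subst hiz
      have := hc x
      rwa [hx, gx hix] at this
    · have := hc i
      rwa [hi, go i hix hiy hiz] at this
  refine ⟨g, ext_toFun fun t => ?_, by rw [cx]; exact hxy.symm, cy, co⟩
  have ht := idem_apply hf t
  rw [mul_toFun, mul_toFun, ofPerm_toFun]
  generalize f.toFun t = i at ht
  by_cases hix : i = x
  · rw [hix, cx, Equiv.swap_apply_left]
  · have hiy : i ≠ y := by rintro rfl; exact hy ht
    rw [co i hix ht, Equiv.swap_apply_of_ne_of_ne hix hiy]

/-- A singular idempotent times a transposition is a product of conjugates of that idempotent. -/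
theorem mul_swap_mem [DecidableEq α] {f : Transf α} (hf : f * f = f)
    (hsing : ∃ w, f.toFun w ≠ w) (x y : α) :
    f * ofPerm (Equiv.swap x y) ∈ genConj ⊤ f := by
  have hself := self_mem_genConj f
  by_cases hx : f.toFun x = x <;> by_cases hy : f.toFun y = y
  · by_cases hxy : x = y
    · subst hxy
      rw [Equiv.swap_self]
      exact hself
    obtain ⟨w, hw⟩ := hsing
    have hwx : w ≠ x := by rintro rfl; exact hw hx
    have hwy : w ≠ y := by rintro rfl; exact hw hy
    -- each of `(x w)`, `(y x)`, `(w y)` moves one point of the current image to a point outside it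
    obtain ⟨g₁, h₁, n₁, w₁, o₁⟩ := exists_conj_mul_swap hf hx hw
    have i₁ : conj g₁ f * conj g₁ f = conj g₁ f := by rw [← conj_mul, hf]
    obtain ⟨g₂, h₂, n₂, -, o₂⟩ := exists_conj_mul_swap i₁ (o₁ y (Ne.symm hxy) hy) n₁
    rw [conj_conj] at h₂ n₂ o₂
    have i₂ : conj (g₂ * g₁) f * conj (g₂ * g₁) f = conj (g₂ * g₁) f := by rw [← conj_mul, hf]
    obtain ⟨g₃, h₃, -⟩ := exists_conj_mul_swap i₂ (o₂ w hwy w₁) n₂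
    rw [conj_conj] at h₃
    have key : f * ofPerm (Equiv.swap x y) =
        f * conj g₁ f * conj (g₂ * g₁) f * conj (g₃ * (g₂ * g₁)) f := by
      rw [mul_assoc _ (conj (g₂ * g₁) f), ← h₃, ← mul_assoc, mul_assoc f, ← h₂, ← mul_assoc f,
        ← h₁]
      apply ext_toFun; intro t
      have ht := idem_apply hf t
      simp only [mul_toFun, ofPerm_toFun]
      generalize f.toFun t = i at ht
      have hiw : i ≠ w := by rintro rfl; exact hw ht
      simp only [Equiv.swap_apply_def]
      split_ifs <;> simp_all
    rw [key]
    exact mul_mem (mul_mem (mul_mem hself (conj_mem_genConj _ hself)) (conj_mem_genConj _ hself))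
      (conj_mem_genConj _ hself)
  · obtain ⟨g, h, -⟩ := exists_conj_mul_swap hf hx hy
    rw [h]
    exact mul_mem hself (conj_mem_genConj g hself)
  · obtain ⟨g, h, -⟩ := exists_conj_mul_swap hf hy hx
    rw [Equiv.swap_comm, h]
    exact mul_mem hself (conj_mem_genConj g hself)
  · have : f * ofPerm (Equiv.swap x y) = f := by
      apply ext_toFun; intro t
      have ht := idem_apply hf t
      rw [mul_toFun, ofPerm_toFun]
      generalize f.toFun t = i at ht
      refine Equiv.swap_apply_of_ne_of_ne ?_ ?_
      · rintro rfl; exact hx ht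
      · rintro rfl; exact hy ht
    rw [this]
    exact hself

theorem mul_perm_mem [Finite α] {e : Transf α} (he : e * e = e) (hsing : ∃ w, e.toFun w ≠ w)
    (p : Equiv.Perm α) : ∀ {x : Transf α}, x ∈ genConj ⊤ e → x * ofPerm p ∈ genConj ⊤ e := by
  classical
  have hswap : ∀ (s t : α) {x : Transf α}, x ∈ genConj ⊤ e →
      x * ofPerm (Equiv.swap s t) ∈ genConj ⊤ e := by
    intro s t x hx
    induction hx using Subsemigroup.closure_induction with
    | mem x hx =>
      obtain ⟨g, -, rfl⟩ := hx
      refine genConj_le (conj_mem_genConj g (self_mem_genConj e))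
        (mul_swap_mem (f := conj g e) ?_ ?_ s t)
      · rw [← conj_mul, he]
      · obtain ⟨w, hw⟩ := hsing
        exact ⟨g w, by simpa [conj_toFun] using hw⟩
    | mul x y hx _ _ hy => rw [mul_assoc]; exact mul_mem hx hy
  induction p using Equiv.Perm.swap_induction_on with
  | one => exact id
  | swap_mul p s t _ ih => exact fun hx => hswap s t (ih hx)

end Transf

theorem stmt5 (n : ℕ) (hn : 1 ≤ n) (a : Transf (Fin n))
    (ha : ¬ Function.Bijective a.toFun) :
    IsIdemGen (genConj (⊤ : Subgroup (Equiv.Perm (Fin n))) a : Set (Transf (Fin n))) ∧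
    IsRegularSet (genConj (⊤ : Subgroup (Equiv.Perm (Fin n))) a : Set (Transf (Fin n))) := by
  obtain ⟨q, hq⟩ := Transf.exists_perm_idem a
  obtain ⟨e, hae⟩ : ∃ e, e = a * Transf.ofPerm q := ⟨_, rfl⟩
  have he : e * e = e := by rw [hae, hq]
  have hae' : a = e * Transf.ofPerm q⁻¹ := by
    rw [hae]; apply Transf.ext_toFun; intro t; simp [Transf.mul_toFun, Transf.ofPerm_toFun]
  have hsing : ∃ w, e.toFun w ≠ w := by
    by_contra! h
    refine ha ?_
    have : a.toFun = ⇑q⁻¹ := by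
      funext t; rw [hae', Transf.mul_toFun, h, Transf.ofPerm_toFun]
    rw [this]
    exact Equiv.bijective _
  have hea : e ∈ genConj ⊤ a := by
    rw [hae']; exact Transf.idem_mem_of_mul_perm he _
  have hS : genConj ⊤ a = genConj ⊤ e := by
    refine le_antisymm (Transf.genConj_le ?_) (Transf.genConj_le hea)
    rw [hae']
    exact Transf.mul_perm_mem he hsing _ (Transf.self_mem_genConj e)
  rw [hS]
  constructor
  · refine congrArg _ (le_antisymm (Subsemigroup.closure_le.2 ?_)
      (Subsemigroup.closure_le.2 fun u hu => hu.1))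
    rintro _ ⟨g, hg, rfl⟩
    refine Subsemigroup.subset_closure ⟨Subsemigroup.subset_closure ⟨g, hg, rfl⟩, ?_⟩
    change Transf.conj g e * Transf.conj g e = Transf.conj g e
    rw [← Transf.conj_mul, he]
  · intro u hu
    obtain ⟨r, hr⟩ := Transf.exists_perm_idem u
    -- `v = r u r`, written as a conjugate of `u` times permutations
    refine ⟨Transf.conj r⁻¹ u * Transf.ofPerm r * Transf.ofPerm r,
      Transf.mul_perm_mem he hsing r (Transf.mul_perm_mem he hsing r
        (Transf.conj_mem_genConj _ hu)), ?_⟩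
    apply Transf.ext_toFun
    intro t
    have h₁ := Transf.idem_apply hr t
    simp only [Transf.mul_toFun, Transf.ofPerm_toFun] at h₁
    simp only [Transf.mul_toFun, Transf.ofPerm_toFun, Transf.conj_toFun, inv_inv]
    rw [← Equiv.Perm.mul_apply r r⁻¹, mul_inv_cancel, Equiv.Perm.one_apply, h₁]
    exact r.injective h₁
end

section
/- Let n ≥ 1, let a ∈ T_n∖S_n be a singular transformation, and let G be a subgroup of S_n. Then the semigroups ⟨G,a⟩∖G and ⟨a^g | g ∈ G⟩ have exactly the same set of idempotent elements. -/
/-!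
Since `g s = (g s g⁻¹) g`, and `⟨a^g | g ∈ G⟩` is stable under conjugation by `G`
(`genConj_conj`), every element of `⟨G, a⟩ ∖ G` has the form `s g` with `s ∈ ⟨a^g | g ∈ G⟩` and
`g ∈ G` (`genGA_factor`). If `u = s g` is idempotent, then for each `k ≥ 1` expanding `u = u ^ k`
gives `u = t g ^ k` with `t ∈ ⟨a^g | g ∈ G⟩` (`idem_factor_pow`); taking `k` to be the order of `g`
yields `u = t`. Conversely, `⟨a^g | g ∈ G⟩` is contained in `⟨G, a⟩`, and as `a` is not injective,
neither is any element of it, so it misses `G`.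
-/

open Finset

/-- `⟨a^g | g ∈ G⟩` is stable under conjugation by elements of `G`. -/
lemma genConj_conj {α : Type*} (G : Subgroup (Equiv.Perm α)) (a : Transf α)
    {g : Equiv.Perm α} (hg : g ∈ G) {s : Transf α} (hs : s ∈ genConj G a) :
    Transf.ofPerm g * s * Transf.ofPerm g⁻¹ ∈ genConj G a := by
  refine Subsemigroup.closure_induction ?_ ?_ hs
  · rintro _ ⟨h, hh, rfl⟩
    refine Subsemigroup.subset_closure
      ⟨g⁻¹ * h, G.mul_mem (G.inv_mem hg) hh, congrArg Transf.mk (funext fun x => ?_)⟩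
    rfl
  · intro x y _ _ hx hy
    convert mul_mem hx hy using 1
    refine congrArg Transf.mk (funext fun z => ?_)
    change g⁻¹ (y.toFun (x.toFun (g z))) = g⁻¹ (y.toFun (g (g⁻¹ (x.toFun (g z)))))
    simp

/-- Moving the permutation past `t` costs only a conjugation of `t`. -/
lemma mul_ofPerm_mul {α : Type*} (s t : Transf α) (g h : Equiv.Perm α) :
    (s * Transf.ofPerm g) * (t * Transf.ofPerm h) =
      (s * (Transf.ofPerm g * t * Transf.ofPerm g⁻¹)) * Transf.ofPerm (h * g) := by
  refine congrArg Transf.mk (funext fun z => ?_)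
  change h (t.toFun (g (s.toFun z))) = h (g (g⁻¹ (t.toFun (g (s.toFun z)))))
  simp

/-- Every element of `⟨G, a⟩` lies in `G` or factors as `s g` with `s ∈ ⟨a^g | g ∈ G⟩`
and `g ∈ G`. -/
lemma genGA_factor {α : Type*} (G : Subgroup (Equiv.Perm α)) (a : Transf α)
    {u : Transf α} (hu : u ∈ genGA G a) :
    u ∈ Transf.ofPerm '' (G : Set (Equiv.Perm α)) ∨
      ∃ s ∈ genConj G a, ∃ g ∈ G, u = s * Transf.ofPerm g := by
  refine Subsemigroup.closure_induction ?_ ?_ hu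
  · rintro x (rfl | hx)
    · exact Or.inr ⟨x, Subsemigroup.subset_closure ⟨1, G.one_mem, rfl⟩, 1, G.one_mem, rfl⟩
    · exact Or.inl hx
  · rintro x y - - (⟨g, hg, rfl⟩ | ⟨s, hs, g, hg, rfl⟩) (⟨h, hh, rfl⟩ | ⟨t, ht, h, hh, rfl⟩)
    · exact Or.inl ⟨h * g, G.mul_mem hh hg, rfl⟩
    · exact Or.inr ⟨_, genConj_conj G a hg ht, h * g, G.mul_mem hh hg,
        mul_ofPerm_mul (Transf.ofPerm 1) t g h⟩
    · exact Or.inr ⟨s, hs, h * g, G.mul_mem hh hg, rfl⟩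
    · exact Or.inr ⟨_, mul_mem hs (genConj_conj G a hg ht), h * g, G.mul_mem hh hg,
        mul_ofPerm_mul s t g h⟩

/-- Expanding `u = u ^ (k + 1)` for an idempotent `u = s g` collects the permutations into
`g ^ (k + 1)` on the right. -/
lemma idem_factor_pow {α : Type*} (G : Subgroup (Equiv.Perm α)) (a : Transf α)
    {u s : Transf α} {g : Equiv.Perm α} (hs : s ∈ genConj G a) (hg : g ∈ G)
    (hu : u = s * Transf.ofPerm g) (hi : u * u = u) (k : ℕ) :
    ∃ t ∈ genConj G a, u = t * Transf.ofPerm (g ^ (k + 1)) := by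
  induction k with
  | zero => exact ⟨s, hs, by simpa using hu⟩
  | succ k ih =>
    obtain ⟨t, ht, h⟩ := ih
    refine ⟨_, mul_mem hs (genConj_conj G a hg ht), ?_⟩
    rw [pow_succ g (k + 1), ← mul_ofPerm_mul, ← hu, ← h, hi]

lemma genConj_le_genGA {α : Type*} (G : Subgroup (Equiv.Perm α)) (a : Transf α) :
    genConj G a ≤ genGA G a := by
  refine Subsemigroup.closure_le.2 ?_
  rintro _ ⟨g, hg, rfl⟩
  have hp : ∀ h ∈ G, Transf.ofPerm h ∈ genGA G a := fun h hh =>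
    Subsemigroup.subset_closure (Or.inr ⟨h, hh, rfl⟩)
  exact mul_mem (mul_mem (hp _ (G.inv_mem hg)) (Subsemigroup.subset_closure (Or.inl rfl)))
    (hp g hg)

lemma genConj_not_injective {α : Type*} (G : Subgroup (Equiv.Perm α)) (a : Transf α)
    (ha : ¬ Function.Injective a.toFun) {u : Transf α} (hu : u ∈ genConj G a) :
    ¬ Function.Injective u.toFun := by
  refine Subsemigroup.closure_induction (p := fun u _ => ¬ Function.Injective u.toFun) ?_ ?_ hu
  · rintro _ ⟨g, -, rfl⟩ h
    have h1 : Function.Injective (g ∘ a.toFun ∘ (g⁻¹ : Equiv.Perm α)) := h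
    exact ha (((Equiv.injective_comp _ _).1 h1.of_comp))
  · intro x y _ _ hx _ h
    have h1 : Function.Injective (y.toFun ∘ x.toFun) := h
    exact hx h1.of_comp

theorem stmt6 (n : ℕ) (hn : 1 ≤ n) (a : Transf (Fin n))
    (ha : ¬ Function.Bijective a.toFun) (G : Subgroup (Equiv.Perm (Fin n))) :
    {u | u ∈ genGAminusG G a ∧ u * u = u} =
      {u | u ∈ (genConj G a : Set (Transf (Fin n))) ∧ u * u = u} := by
  ext u
  constructor
  · rintro ⟨⟨hu, hnot⟩, hi⟩
    refine ⟨?_, hi⟩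
    obtain h | ⟨s, hs, g, hg, h⟩ := genGA_factor G a hu
    · exact absurd h hnot
    · obtain ⟨t, ht, h'⟩ := idem_factor_pow G a hs hg h hi (orderOf g - 1)
      rw [Nat.sub_add_cancel (orderOf_pos g), pow_orderOf_eq_one] at h'
      have h1 : u = t := h'
      exact h1 ▸ ht
  · rintro ⟨hu, hi⟩
    refine ⟨⟨genConj_le_genGA G a hu, ?_⟩, hi⟩
    rintro ⟨g, -, rfl⟩
    exact genConj_not_injective G a (fun h => ha (Finite.injective_iff_bijective.1 h)) hu
      g.injective
end

section
/- Let n ≥ 1 and let G be a subgroup of S_n. If the semigroup ⟨G,a⟩∖G is idempotent generated for every singular transformation a ∈ T_n∖S_n, then G has the universal transversal property. -/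
/-!
Let `I` have as many elements as `P` has classes. If `I` is everything, the identity works.
Otherwise choose a singular `a` with kernel `P` and image `I`. As `a` lies in `⟨G, a⟩ ∖ G`, it is a
product of idempotents of that semigroup; let `e` be the first factor, so that `e a = a`. Then `e`
maps every class of `P` into itself. On the other hand `e` is a product involving `a`, hence its
image lies in a translate `I g` with `g ∈ G` (`range_subset_of_mem`). So `I g` meets every class
of `P`, and since `|I g|` is the number of classes, it meets each of them exactly once
(`isTransversal_of_inter_nonempty`).
-/

open Finset

/-- By counting, a set with as many points as there are classes is a transversal as soon as it
meets every class. -/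
lemma isTransversal_of_inter_nonempty {α : Type*} [DecidableEq α] [Fintype α] (T : Finset α)
    (P : Finpartition (Finset.univ : Finset α)) (hc : P.parts.card = T.card)
    (hm : ∀ p ∈ P.parts, (T ∩ p).Nonempty) : IsTransversal T P := by
  have hsum : ∑ p ∈ P.parts, 1 = ∑ p ∈ P.parts, (T ∩ p).card := by
    rw [← Finset.card_eq_sum_ones, hc]
    have hT : T = P.parts.biUnion (fun p => T ∩ p) := by
      ext x
      simp only [Finset.mem_biUnion, Finset.mem_inter]
      refine ⟨fun hx => ?_, fun ⟨_, _, hx, _⟩ => hx⟩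
      exact ⟨P.part x, P.part_mem.2 (Finset.mem_univ x), hx,
        P.mem_part (Finset.mem_univ x)⟩
    conv_lhs => rw [hT]
    refine Finset.card_biUnion fun p hp q hq hpq => ?_
    exact (P.disjoint hp hq hpq).mono Finset.inter_subset_right Finset.inter_subset_right
  have := (Finset.sum_eq_sum_iff_of_le (fun p hp => Finset.card_pos.2 (hm p hp))).1 hsum
  exact fun p hp => (this p hp).symm

/-- A product involving `a` has its image inside the translate of the image of `a` by the element
of `G` that follows the last occurrence of `a`. -/
lemma range_subset_of_mem {α : Type*} (G : Subgroup (Equiv.Perm α)) (a : Transf α)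
    {u : Transf α} (hu : u ∈ genGAminusG G a) :
    ∃ g ∈ G, ∀ x, ∃ y, u.toFun x = g (a.toFun y) := by
  have key : ∀ v ∈ genGA G a, v ∈ Transf.ofPerm '' (G : Set (Equiv.Perm α)) ∨
      ∃ g ∈ G, ∀ x, ∃ y, v.toFun x = g (a.toFun y) := by
    intro v hv
    induction hv using Subsemigroup.closure_induction with
    | mem v hv =>
      rcases hv with rfl | hv
      · exact Or.inr ⟨1, G.one_mem, fun x => ⟨x, rfl⟩⟩
      · exact Or.inl hv
    | mul v w _ _ hv hw =>
      rcases hw with ⟨k, hk, rfl⟩ | ⟨g, hg, hw⟩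
      · rcases hv with ⟨l, hl, rfl⟩ | ⟨g, hg, hv⟩
        · exact Or.inl ⟨k * l, G.mul_mem hk hl, rfl⟩
        · refine Or.inr ⟨k * g, G.mul_mem hk hg, fun x => ?_⟩
          obtain ⟨y, hy⟩ := hv x
          exact ⟨y, congrArg k hy⟩
      · exact Or.inr ⟨g, hg, fun x => hw (v.toFun x)⟩
  exact (key u hu.1).resolve_left hu.2

theorem stmt9 (n : ℕ) (hn : 1 ≤ n) (G : Subgroup (Equiv.Perm (Fin n)))
    (h : ∀ a : Transf (Fin n), ¬ Function.Bijective a.toFun →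
      IsIdemGen (genGAminusG G a)) :
    HasUTP G := by
  intro I P hc
  by_cases hI : I = Finset.univ
  · refine ⟨1, G.one_mem, isTransversal_of_inter_nonempty _ P ?_ fun p hp => ?_⟩
    · simpa using hc
    · simpa [hI] using P.nonempty_of_mem_parts hp
  let φ := Finset.equivOfCardEq hc
  let a : Transf (Fin n) :=
    ⟨fun x => φ ⟨P.part x, P.part_mem.2 (Finset.mem_univ x)⟩⟩
  have haI : ∀ x, a.toFun x ∈ I := fun x => (φ _).2
  have hker : ∀ x y, a.toFun x = a.toFun y → P.part x = P.part y := fun x y hxy =>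
    congrArg Subtype.val (φ.injective (Subtype.ext hxy))
  have hsing : ¬ Function.Bijective a.toFun := fun hb => hI <| by
    refine Finset.eq_univ_of_forall fun y => ?_
    obtain ⟨x, rfl⟩ := hb.2 y
    exact haI x
  have haS : a ∈ genGAminusG G a := by
    refine ⟨Subsemigroup.subset_closure (Set.mem_insert _ _), ?_⟩
    rintro ⟨g, -, hg⟩
    exact hsing (hg ▸ g.bijective)
  have hacl := haS
  rw [h a hsing] at hacl
  -- the first factor of a product of idempotents is a left identity for that product
  obtain ⟨e, heS, hea⟩ : ∃ e ∈ genGAminusG G a, e * a = a := by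
    have hleft : ∀ v ∈ Subsemigroup.closure {u | u ∈ genGAminusG G a ∧ u * u = u},
        ∃ e ∈ genGAminusG G a, e * v = v := by
      intro v hv
      induction hv using Subsemigroup.closure_induction with
      | mem v hv => exact ⟨v, hv.1, hv.2⟩
      | mul v w _ _ hv _ =>
        obtain ⟨e, he, hev⟩ := hv
        exact ⟨e, he, by rw [← mul_assoc, hev]⟩
    exact hleft a hacl
  obtain ⟨g, hg, hrange⟩ := range_subset_of_mem G a heS
  refine ⟨g, hg, isTransversal_of_inter_nonempty _ P ?_ fun p hp => ?_⟩
  · rw [Finset.card_image_of_injective _ g.injective, hc]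
  · obtain ⟨x, hx⟩ := P.nonempty_of_mem_parts hp
    have hpart : P.part (e.toFun x) = P.part x :=
      hker _ _ (congrFun (congrArg Transf.toFun hea) x)
    refine ⟨e.toFun x, Finset.mem_inter.2 ⟨?_, ?_⟩⟩
    · obtain ⟨y, hy⟩ := hrange x
      exact hy ▸ Finset.mem_image_of_mem g (haI y)
    · rw [← P.part_eq_of_mem hp hx, ← hpart]
      exact P.mem_part (Finset.mem_univ _)
end

section
/- Let n ≥ 1, let G be a subgroup of S_n, and let a ∈ T_n∖S_n be a singular transformation such that K_G(a) is empty (i.e. rank(aga) < rank(a) for every g ∈ G). Then every idempotent of the semigroup ⟨G,a⟩∖G has rank strictly less than rank(a), and a is not a regular element of ⟨G,a⟩∖G. -/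
/-!
Since `G` is a group, a product of generators of `⟨G, a⟩` in which `a` occurs exactly once has the
form `g a h` with `g, h ∈ G`; one in which `a` occurs at least twice factors through some `a g a`
with `g ∈ G`, so its rank is below `rank a` by hypothesis. Hence every element of `⟨G, a⟩` lies in
`G`, or equals some `g a h`, or has rank below `rank a` (`genGA_cases`).

An idempotent `u = g a h` satisfies `u = u u = g (a h g a) h`, so it too has rank below `rank a`.
If `a = a v a` with `v = g a h`, then `a = (a g a) h a` has rank below `rank a`, and if `rank v` is
below `rank a`, then so is `rank (a v a)`; both are absurd.
-/

open Finset

namespace Transf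

theorem rank_mul_le_left {α : Type*} [Finite α] (a b : Transf α) : rank (a * b) ≤ rank a := by
  have h : Set.range (a * b).toFun = b.toFun '' Set.range a.toFun :=
    Set.range_comp b.toFun a.toFun
  unfold rank
  rw [h]
  exact Set.ncard_image_le (Set.toFinite _)

theorem rank_mul_le_right {α : Type*} [Finite α] (a b : Transf α) : rank (a * b) ≤ rank b :=
  Set.ncard_le_ncard (Set.range_comp_subset_range a.toFun b.toFun) (Set.toFinite _)

/-- The middle two permutations merge into one element of `G`, exposing a factor `a k a` with `k ∈ G`. -/
theorem rank_sandwich_mul_lt {α : Type*} [Finite α] {G : Subgroup (Equiv.Perm α)} {a : Transf α}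
    (hK : ∀ g ∈ G, rank (a * ofPerm g * a) < rank a) {g h g' h' : Equiv.Perm α}
    (hh : h ∈ G) (hg' : g' ∈ G) :
    rank ((ofPerm g * a * ofPerm h) * (ofPerm g' * a * ofPerm h')) < rank a := by
  have e : (ofPerm g * a * ofPerm h) * (ofPerm g' * a * ofPerm h')
      = ofPerm g * (a * ofPerm (g' * h) * a) * ofPerm h' := rfl
  rw [e]
  exact ((rank_mul_le_left _ _).trans (rank_mul_le_right _ _)).trans_lt
    (hK _ (G.mul_mem hg' hh))

/-- The three cases are: no occurrence of `a`, exactly one, and at least two. -/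
theorem genGA_cases {α : Type*} [Finite α] {G : Subgroup (Equiv.Perm α)} {a : Transf α}
    (hK : ∀ g ∈ G, rank (a * ofPerm g * a) < rank a) {u : Transf α} (hu : u ∈ genGA G a) :
    (∃ g ∈ G, u = ofPerm g) ∨ (∃ g ∈ G, ∃ h ∈ G, u = ofPerm g * a * ofPerm h) ∨
      rank u < rank a := by
  induction hu using Subsemigroup.closure_induction with
  | mem x hx =>
    rcases hx with rfl | ⟨g, hg, rfl⟩
    · exact Or.inr (Or.inl ⟨1, G.one_mem, 1, G.one_mem, rfl⟩)
    · exact Or.inl ⟨g, hg, rfl⟩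
  | mul x y _ _ hx hy =>
    rcases hx with ⟨g, hg, rfl⟩ | ⟨g, hg, h, hh, rfl⟩ | hx
    · rcases hy with ⟨g', hg', rfl⟩ | ⟨g', hg', h', hh', rfl⟩ | hy
      · exact Or.inl ⟨g' * g, G.mul_mem hg' hg, rfl⟩
      · exact Or.inr (Or.inl ⟨g' * g, G.mul_mem hg' hg, h', hh', rfl⟩)
      · exact Or.inr (Or.inr ((rank_mul_le_right _ _).trans_lt hy))
    · rcases hy with ⟨g', hg', rfl⟩ | ⟨g', hg', h', hh', rfl⟩ | hy
      · exact Or.inr (Or.inl ⟨g, hg, g' * h, G.mul_mem hg' hh, rfl⟩)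
      · exact Or.inr (Or.inr (rank_sandwich_mul_lt hK hh hg'))
      · exact Or.inr (Or.inr ((rank_mul_le_right _ _).trans_lt hy))
    · exact Or.inr (Or.inr ((rank_mul_le_left _ _).trans_lt hx))

end Transf

theorem stmt10 (n : ℕ) (hn : 1 ≤ n) (G : Subgroup (Equiv.Perm (Fin n)))
    (a : Transf (Fin n)) (ha : ¬ Function.Bijective a.toFun)
    (hK : ∀ g ∈ G, Transf.rank (a * Transf.ofPerm g * a) < Transf.rank a) :
    (∀ u ∈ genGAminusG G a, u * u = u → Transf.rank u < Transf.rank a) ∧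
    ¬ ∃ v ∈ genGAminusG G a, a * v * a = a := by
  constructor
  · rintro u ⟨hu, huG⟩ huu
    rcases Transf.genGA_cases hK hu with ⟨g, hg, rfl⟩ | ⟨g, hg, h, hh, rfl⟩ | hlt
    · exact absurd ⟨g, hg, rfl⟩ huG
    · rw [← huu]
      exact Transf.rank_sandwich_mul_lt hK hh hg
    · exact hlt
  · rintro ⟨v, ⟨hv, hvG⟩, hava⟩
    have key : Transf.rank (a * v * a) < Transf.rank a := by
      rcases Transf.genGA_cases hK hv with ⟨g, hg, rfl⟩ | ⟨g, hg, h, hh, rfl⟩ | hlt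
      · exact absurd ⟨g, hg, rfl⟩ hvG
      · have e : a * (Transf.ofPerm g * a * Transf.ofPerm h) * a
            = (a * Transf.ofPerm g * a) * (Transf.ofPerm h * a) := rfl
        rw [e]
        exact (Transf.rank_mul_le_left _ _).trans_lt (hK g hg)
      · exact ((Transf.rank_mul_le_left _ _).trans (Transf.rank_mul_le_right _ _)).trans_lt hlt
    rw [hava] at key
    exact lt_irrefl _ key
end

section
/- Let n ≥ 1, let G be a subgroup of S_n, and let a ∈ T_n∖S_n be a singular transformation. If the semigroup ⟨G,a⟩ is regular, then the semigroup ⟨G,a⟩∖G is regular. -/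
/-!
If `u = u v u` with `u, v ∈ ⟨G, a⟩`, then `w = v u v` also satisfies `u w u = u`, and `w`
has `u` as a factor. On a finite set a product is bijective only if each factor is, and `a`
is not, so the bijective elements of `⟨G, a⟩` are exactly those of `G`
(`mem_of_bijective`). Hence a `u` outside `G` is singular, so `w` is singular as well and
lies in `⟨G, a⟩ ∖ G`.
-/

open Finset

theorem Transf.bijective_of_mul {α : Type*} [Finite α] {x y : Transf α}
    (h : Function.Bijective (x * y).toFun) :
    Function.Bijective x.toFun ∧ Function.Bijective y.toFun := by
  have h' : Function.Bijective (y.toFun ∘ x.toFun) := h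
  exact ⟨Finite.injective_iff_bijective.mp h'.1.of_comp,
    Finite.surjective_iff_bijective.mp h'.2.of_comp⟩

/-- For singular `a`, the bijective elements of `⟨G, a⟩` all belong to `G`: a word in the
generators that involves `a` is singular. -/
theorem mem_of_bijective {α : Type*} [Finite α] (G : Subgroup (Equiv.Perm α))
    (a : Transf α) (ha : ¬ Function.Bijective a.toFun) {u : Transf α} (hu : u ∈ genGA G a)
    (hb : Function.Bijective u.toFun) :
    u ∈ Transf.ofPerm '' (G : Set (Equiv.Perm α)) := by
  unfold genGA at hu
  induction hu using Subsemigroup.closure_induction with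
  | mem x hx =>
    rcases hx with rfl | hx
    · exact absurd hb ha
    · exact hx
  | mul x y _ _ ihx ihy =>
    obtain ⟨hx, hy⟩ := Transf.bijective_of_mul hb
    obtain ⟨g, hg, rfl⟩ := ihx hx
    obtain ⟨k, hk, rfl⟩ := ihy hy
    -- Permutations compose right-to-left, transformations left-to-right.
    exact ⟨k * g, G.mul_mem hk hg, rfl⟩

theorem stmt11 (n : ℕ) (hn : 1 ≤ n) (G : Subgroup (Equiv.Perm (Fin n)))
    (a : Transf (Fin n)) (ha : ¬ Function.Bijective a.toFun)
    (h : IsRegularSet (genGA G a : Set (Transf (Fin n)))) :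
    IsRegularSet (genGAminusG G a) := by
  rintro u ⟨hu, huG⟩
  obtain ⟨v, hv, huv⟩ := h u hu
  refine ⟨v * u * v, ⟨mul_mem (mul_mem hv hu) hv, ?_⟩, ?_⟩
  · rintro ⟨g, -, hg⟩
    have hb : Function.Bijective (v * u * v).toFun := by
      rw [← hg]
      exact g.bijective
    exact huG (mem_of_bijective G a ha hu
      (Transf.bijective_of_mul (Transf.bijective_of_mul hb).1).2)
  · calc u * (v * u * v) * u = (u * v * u) * v * u := by simp only [mul_assoc]
      _ = u := by rw [huv, huv]
end

section
/- Every subgroup G of S_n with the universal transversal property is synchronizing. -/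
/-!
Suppose all `G`-translates of a transversal `T` of `P` are transversals, where `P` has `k` classes
and `2 ≤ k < n`. Some class `p` contains two distinct points `a`, `b`.

If `k ≥ 3`, the universal transversal property applied to `T` and a partition with `k` classes in
which `{a}` and `{b}` are classes yields a translate of `T` containing both `a` and `b`. This
translate meets `p` twice, a contradiction.

If `k = 2`, write `T = {s, t}`; every `g ∈ G` sends exactly one of `s`, `t` into `p`. Given `g ∈ G`,
let `A` be the set of points `x` for which `x ∈ p ↔ g x ∈ p`. A translate of `{s, t}` lies inside `A`
or inside its complement, so by the universal transversal property for 2-sets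
(`HasUTP.exists_separating`) `A` is empty or everything; that is, `g` preserves or exchanges `p`
and its complement. Hence no translate of `{a, b}` is split by `p`, contradicting the same property.
-/

open Finset

/-- `G` is synchronizing: for every non-trivial partition `P` (with at least `2` and at
most `n - 1` classes) and every transversal `T` of `P`, some `G`-translate of `T` fails
to be a transversal for `P`. -/
def IsSynchronizing {α : Type*} [DecidableEq α] [Fintype α]
    (G : Subgroup (Equiv.Perm α)) : Prop :=
  ∀ P : Finpartition (Finset.univ : Finset α), 2 ≤ P.parts.card →
    P.parts.card ≤ Fintype.card α - 1 →
    ∀ T : Finset α, IsTransversal T P → ∃ g ∈ G, ¬ IsTransversal (T.image ⇑g) P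

theorem IsTransversal.card_eq {α : Type*} [DecidableEq α] [Fintype α] {T : Finset α}
    {P : Finpartition (Finset.univ : Finset α)} (h : IsTransversal T P) :
    P.parts.card = T.card := by
  have h1 : T = P.parts.biUnion (fun p => T ∩ p) := by
    rw [← Finset.inter_biUnion, show P.parts.biUnion (fun p => p) = Finset.univ from P.biUnion_parts,
      Finset.inter_univ]
  have h2 : (P.parts.biUnion (fun p => T ∩ p)).card = ∑ p ∈ P.parts, (T ∩ p).card := by
    apply Finset.card_biUnion
    intro x hx y hy hxy
    exact (P.disjoint hx hy hxy).mono Finset.inter_subset_right Finset.inter_subset_right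
  rw [h1, h2, Finset.sum_congr rfl h]
  simp

/-- A group with the universal transversal property moves any 2-set so that it is split by a given
proper nonempty subset. -/
theorem HasUTP.exists_separating {α : Type*} [DecidableEq α] [Fintype α]
    {G : Subgroup (Equiv.Perm α)} (h : HasUTP G) {s t : α} (hst : s ≠ t) (A : Finset α)
    (hA : A.Nonempty) (hA' : Aᶜ.Nonempty) : ∃ g ∈ G, (g s ∈ A ↔ g t ∉ A) := by
  let Q : Finpartition (Finset.univ : Finset α) :=
    (Finpartition.indiscrete hA.ne_empty).extend (b := Aᶜ) hA'.ne_empty disjoint_compl_right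
      (by simp)
  have hQ : Q.parts.card = 2 := by
    simp only [Q, Finpartition.card_extend, Finpartition.indiscrete_parts, Finset.card_singleton]
  obtain ⟨g, hg, hT⟩ := h {s, t} Q (by rw [hQ, Finset.card_pair hst])
  refine ⟨g, hg, ?_⟩
  have hAQ : (Finset.image g {s, t} ∩ A).card = 1 := hT A (by simp [Q, Finpartition.extend])
  have hne : g s ≠ g t := fun e => hst (g.injective e)
  by_cases h1 : g s ∈ A <;> by_cases h2 : g t ∈ A <;>
    simp_all [Finset.image_insert, Finset.insert_inter_of_mem, Finset.insert_inter_of_notMem]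

/-- A group with the universal transversal property moves any set of at least three points so that
it contains two given points: these can be made singleton classes of a partition with `|T|` classes. -/
theorem HasUTP.exists_pair_subset {α : Type*} [DecidableEq α] [Fintype α]
    {G : Subgroup (Equiv.Perm α)} (h : HasUTP G) {T : Finset α} (hT : 3 ≤ T.card) {a b : α}
    (hab : a ≠ b) : ∃ g ∈ G, a ∈ T.image g ∧ b ∈ T.image g := by
  have hTn := T.card_le_univ
  obtain ⟨S, hS, -, hSc⟩ := Finset.exists_subsuperset_card_eq (Finset.subset_univ {a, b})
    (n := T.card - 1) (by rw [Finset.card_pair hab]; omega) (by rw [Finset.card_univ]; omega)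
  have hS' : Sᶜ.Nonempty := by
    rw [← Finset.card_pos, Finset.card_compl]; omega
  -- The classes are the singletons of points of `S`, together with the complement of `S`.
  let Q : Finpartition (Finset.univ : Finset α) :=
    (⊥ : Finpartition S).extend (b := Sᶜ) hS'.ne_empty disjoint_compl_right (by simp)
  have hQ : Q.parts.card = T.card := by
    simp only [Q, Finpartition.card_extend, Finpartition.card_bot]; omega
  obtain ⟨g, hg, hgT⟩ := h T Q hQ
  have key : ∀ x ∈ S, x ∈ T.image g := by
    intro x hx
    have := hgT {x} (by simp [Q, Finpartition.extend, hx])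
    by_contra hx'
    rw [Finset.inter_singleton_of_notMem hx'] at this
    simp at this
  exact ⟨g, hg, key a (hS (by simp)), key b (hS (by simp))⟩

theorem stmt12 (n : ℕ) (G : Subgroup (Equiv.Perm (Fin n))) (h : HasUTP G) :
    IsSynchronizing G := by
  intro P h2 hn T hT
  by_contra! hcon
  have hcard := hT.card_eq
  obtain ⟨a, -, b, -, hab, hpart⟩ := Finset.exists_ne_map_eq_of_card_lt_of_maps_to
    (s := Finset.univ) (t := P.parts) (f := P.part)
    (by rw [Finset.card_univ]; omega) (fun x _ => P.part_mem.2 (Finset.mem_univ x))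
  obtain ⟨p, hp, hap, hbp⟩ : ∃ p ∈ P.parts, a ∈ p ∧ b ∈ p :=
    ⟨P.part a, P.part_mem.2 (Finset.mem_univ a), P.mem_part (Finset.mem_univ a),
      hpart ▸ P.mem_part (Finset.mem_univ b)⟩
  rcases Nat.lt_or_ge 2 T.card with h3 | h3
  · obtain ⟨g, hg, ha, hb⟩ := h.exists_pair_subset h3 hab
    obtain ⟨x, hx⟩ := Finset.card_eq_one.1 (hcon g hg p hp)
    have hax : a ∈ ({x} : Finset (Fin n)) := hx ▸ Finset.mem_inter.2 ⟨ha, hap⟩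
    have hbx : b ∈ ({x} : Finset (Fin n)) := hx ▸ Finset.mem_inter.2 ⟨hb, hbp⟩
    simp only [Finset.mem_singleton] at hax hbx
    exact hab (hax.trans hbx.symm)
  · obtain ⟨s, t, hst, rfl⟩ := Finset.card_eq_two.1 (show T.card = 2 by omega)
    have hsplit : ∀ g ∈ G, (g s ∈ p ↔ g t ∉ p) := by
      intro g hg
      have hc := hcon g hg p hp
      have hne : g s ≠ g t := fun e => hst (g.injective e)
      by_cases h1 : g s ∈ p <;> by_cases h2 : g t ∈ p <;>
        simp_all [Finset.image_insert, Finset.insert_inter_of_mem, Finset.insert_inter_of_notMem]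
    have hpc : pᶜ.Nonempty := by
      have h1 := hsplit 1 G.one_mem
      simp only [Equiv.Perm.coe_one, id] at h1
      by_cases hs : s ∈ p
      · exact ⟨t, Finset.mem_compl.2 (h1.1 hs)⟩
      · exact ⟨s, Finset.mem_compl.2 hs⟩
    obtain ⟨g, hg, hsep⟩ := h.exists_separating hab p ⟨a, hap⟩ hpc
    -- Exactly one of `a`, `b` keeps its side of `p` under `g`, so `A` is proper and nonempty.
    let A : Finset (Fin n) := Finset.univ.filter (fun x => x ∈ p ↔ g x ∈ p)
    have hmem : ∀ x, x ∈ A ↔ (x ∈ p ↔ g x ∈ p) := fun x => by simp [A]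
    have hA : A.Nonempty := by
      by_cases ha : g a ∈ p
      · exact ⟨a, (hmem a).2 (by tauto)⟩
      · exact ⟨b, (hmem b).2 (by tauto)⟩
    have hAc : Aᶜ.Nonempty := by
      by_cases ha : g a ∈ p
      · exact ⟨b, by rw [Finset.mem_compl, hmem]; tauto⟩
      · exact ⟨a, by rw [Finset.mem_compl, hmem]; tauto⟩
    obtain ⟨k, hk, hks⟩ := h.exists_separating hst A hA hAc
    have h1 := hsplit k hk
    have h2 := hsplit (g * k) (G.mul_mem hg hk)
    rw [hmem, hmem] at hks
    simp only [Equiv.Perm.mul_apply] at h2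
    tauto
end

section
/- Let n ≥ 1 and let G be a subgroup of S_n with the universal transversal property. Then for every integer r with 1 ≤ r ≤ n−1, the inequality |G|·(r+1) ≥ C(n,r) holds, where C(n,r) is the binomial coefficient. -/
/-!
Fix an `(r+1)`-subset `J`. For an `r`-subset `I`, apply the transversal property to `J` and the
partition of `{1,…,n}` into the singletons of `I` and the complement of `I`: a transversal of this
partition contains `I`, so `I ⊆ J g` for some `g ∈ G` (lemma `HasUTP.exists_subset_image`). By
cardinality `I = (J ∖ {x}) g` for some `x ∈ J`, so each of the `C(n,r)` sets `I` is determined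
by a pair `(g, x) ∈ G × J`.
-/

open Finset

/-- Every `r`-set lies in some `G`-translate of any given `(r+1)`-set. -/
theorem HasUTP.exists_subset_image {α : Type*} [DecidableEq α] [Fintype α]
    {G : Subgroup (Equiv.Perm α)} (h : HasUTP G) {I J : Finset α} (hIJ : J.card = I.card + 1) :
    ∃ g ∈ G, I ⊆ J.image ⇑g := by
  have hne : Iᶜ ≠ ⊥ := by
    intro hc
    have h1 := Finset.card_add_card_compl I
    have h2 := Finset.card_le_univ J
    rw [hc, Finset.bot_eq_empty, Finset.card_empty] at h1
    omega
  -- the partition of the whole set into the singletons of `I` and the complement of `I`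
  let P : Finpartition (Finset.univ : Finset α) :=
    (⊥ : Finpartition I).extend hne disjoint_compl_right (Finset.union_compl I)
  have hP : P.parts.card = J.card := by
    rw [Finpartition.card_extend, Finpartition.card_bot, hIJ]
  obtain ⟨g, hg, hT⟩ := h J P hP
  refine ⟨g, hg, fun x hx => ?_⟩
  have hxP : {x} ∈ P.parts := by
    simp only [P, Finpartition.extend_parts, Finset.mem_insert]
    exact Or.inr (Finpartition.mem_bot_iff.2 ⟨x, hx, rfl⟩)
  have hcard := hT _ hxP
  by_contra hxJ
  rw [Finset.inter_singleton_of_notMem hxJ] at hcard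
  simp at hcard

theorem stmt14 (n : ℕ) (hn : 1 ≤ n) (G : Subgroup (Equiv.Perm (Fin n)))
    (h : HasUTP G) (r : ℕ) (hr1 : 1 ≤ r) (hr2 : r ≤ n - 1) :
    Nat.card G * (r + 1) ≥ n.choose r := by
  obtain ⟨J, -, hJ⟩ := Finset.exists_subset_card_eq (s := (Finset.univ : Finset (Fin n)))
    (n := r + 1) (by rw [Finset.card_univ, Fintype.card_fin]; omega)
  have : Fintype G := Fintype.ofFinite G
  have hsub : Finset.powersetCard r (Finset.univ : Finset (Fin n)) ⊆
      ((Finset.univ : Finset G) ×ˢ J).image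
        (fun p => (J.erase p.2).image ⇑(p.1 : Equiv.Perm (Fin n))) := by
    intro I hI
    have hIr : I.card = r := (Finset.mem_powersetCard.1 hI).2
    obtain ⟨g, hg, hIg⟩ := h.exists_subset_image (I := I) (J := J) (by omega)
    have hJg : (J.image ⇑g).card = r + 1 := by
      rw [Finset.card_image_of_injective _ g.injective, hJ]
    obtain ⟨y, hy, hyI⟩ := Finset.exists_mem_notMem_of_card_lt_card
      (s := I) (t := J.image ⇑g) (by omega)
    obtain ⟨x, hx, rfl⟩ := Finset.mem_image.1 hy
    refine Finset.mem_image.2 ⟨(⟨g, hg⟩, x), by simp [hx], ?_⟩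
    change (J.erase x).image ⇑g = I
    rw [Finset.image_erase g.injective]
    symm
    apply Finset.eq_of_subset_of_card_le (Finset.subset_erase.2 ⟨hIg, hyI⟩)
    rw [Finset.card_erase_of_mem hy]
    omega
  have hle := (Finset.card_le_card hsub).trans Finset.card_image_le
  rwa [Finset.card_powersetCard, Finset.card_univ, Fintype.card_fin, Finset.card_product, hJ,
    Finset.card_univ, ← Nat.card_eq_fintype_card] at hle
end
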